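/- Define Q_α(ρ,σ) = tr((σ^{(1−α)/(2α)} ρ σ^{(1−α)/(2α)})^α) for positive definite matrices ρ, σ. For α > 1, Q_α is jointly convex: Q_α((1−t)ρ₀+tρ₁, (1−t)σ₀+tσ₁) ≤ (1−t)Q_α(ρ₀,σ₀) + t Q_α(ρ₁,σ₁) for all t ∈ [0,1]. -/

import Mathlib

open Matrix ComplexOrder

/-- Functional calculus for Hermitian matrices: apply `f` to the eigenvalues. -/
noncomputable def mfun {m : Type*} [Fintype m] [DecidableEq m] (f : ℝ → ℝ)
    (A : Matrix m m ℂ) : Matrix m m ℂ :=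
  if hA : A.IsHermitian then
    (hA.eigenvectorUnitary : Matrix m m ℂ) *
      Matrix.diagonal (fun i => (f (hA.eigenvalues i) : ℂ)) *
      (star (hA.eigenvectorUnitary : Matrix m m ℂ))
  else 0

/-- Real matrix power via the functional calculus. -/
noncomputable def mpow {m : Type*} [Fintype m] [DecidableEq m]
    (A : Matrix m m ℂ) (p : ℝ) : Matrix m m ℂ :=
  mfun (fun x => x ^ p) A

/-!
Fix `α > 1` with conjugate exponent `β`. By the trace Young inequality
`tr(AB) ≤ α⁻¹ tr(A^α) + β⁻¹ tr(B^β)`, whose equality case is `B = A^(α - 1)`, the number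
`α⁻¹ Q_α(ρ, σ)` is the maximum over all matrices `K` of
`tr(Kᴴ ρ K) - β⁻¹ tr((Kᴴ σ^(1/β) K)^β)`. The first term is linear in `ρ`, and a maximum of convex
functions is convex, so it remains to see that `A ↦ tr((Kᴴ A^p K)^(1/p))` is concave for
`0 < p < 1` (Epstein). Again by Young, `p` times this function is the maximum over `B ≥ 0` of
`tr(Kᴴ A^p K B^(1-p)) - (1 - p) tr B`, and partial maximization preserves joint concavity, so this
follows from the joint concavity of `tr(Kᴴ A^p K B^(1-p))` (Lieb). The latter holds because
`a^p b^(1-p)` is a positive integral of parallel sums of `a` and `b / s`, and the quadratic form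
at `K` of the parallel sum of left multiplication by `A` and right multiplication by `B` is the
minimum over `X` of `tr(Xᴴ A X) + tr((K - X)ᴴ (K - X) B)`, which is linear in `(A, B)`.
-/

section ConvexAnalysis

variable {R E F β ι : Type*} [Semiring R] [PartialOrder R] [AddCommMonoid E] [SMul R E]
  [AddCommMonoid F] [SMul R F] [AddCommMonoid β] [PartialOrder β] [SMul R β]

lemma convexOn_of_isGreatest [IsOrderedAddMonoid β] [PosSMulMono R β] {s : Set E} {f : E → β}
    {g : ι → E → β} (hs : Convex R s) (hg : ∀ i, ConvexOn R s (g i))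
    (hf : ∀ x ∈ s, IsGreatest (Set.range fun i => g i x) (f x)) : ConvexOn R s f := by
  refine ⟨hs, fun x hx y hy a b ha hb hab => ?_⟩
  obtain ⟨i, hi⟩ := (hf _ (hs hx hy ha hb hab)).1
  have hx' : g i x ≤ f x := (hf x hx).2 ⟨i, rfl⟩
  have hy' : g i y ≤ f y := (hf y hy).2 ⟨i, rfl⟩
  calc f (a • x + b • y) = g i (a • x + b • y) := hi.symm
    _ ≤ a • g i x + b • g i y := (hg i).2 hx hy ha hb hab
    _ ≤ a • f x + b • f y := by gcongr

lemma concaveOn_of_isLeast [IsOrderedAddMonoid β] [PosSMulMono R β] {s : Set E} {f : E → β}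
    {g : ι → E → β} (hs : Convex R s) (hg : ∀ i, ConcaveOn R s (g i))
    (hf : ∀ x ∈ s, IsLeast (Set.range fun i => g i x) (f x)) : ConcaveOn R s f :=
  convexOn_of_isGreatest (β := βᵒᵈ) hs hg hf

lemma concaveOn_of_isGreatest_image_prodMk {s : Set E} {t : Set F} {f : E × F → β} {g : E → β}
    (hs : Convex R s) (hf : ConcaveOn R (s ×ˢ t) f)
    (hg : ∀ x ∈ s, IsGreatest ((fun y => f (x, y)) '' t) (g x)) : ConcaveOn R s g := by
  refine ⟨hs, fun x hx y hy a b ha hb hab => ?_⟩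
  obtain ⟨u, hu, hux⟩ := (hg x hx).1
  obtain ⟨v, hv, hvy⟩ := (hg y hy).1
  have hxu : (x, u) ∈ s ×ˢ t := ⟨hx, hu⟩
  have hyv : (y, v) ∈ s ×ˢ t := ⟨hy, hv⟩
  calc a • g x + b • g y = a • f (x, u) + b • f (y, v) := by rw [← hux, ← hvy]
    _ ≤ f (a • (x, u) + b • (y, v)) := hf.2 hxu hyv ha hb hab
    _ ≤ g (a • x + b • y) :=
      (hg _ (hs hx hy ha hb hab)).2 ⟨_, (hf.1 hxu hyv ha hb hab).2, rfl⟩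

lemma concaveOn_integral {Ω E : Type*} [AddCommMonoid E] [SMul ℝ E] [MeasurableSpace Ω]
    {μ : MeasureTheory.Measure Ω} {s : Set E} {f : Ω → E → ℝ} (hs : Convex ℝ s)
    (hf : ∀ᵐ ω ∂μ, ConcaveOn ℝ s (f ω))
    (hint : ∀ x ∈ s, MeasureTheory.Integrable (fun ω => f ω x) μ) :
    ConcaveOn ℝ s fun x => ∫ ω, f ω x ∂μ := by
  refine ⟨hs, fun x hx y hy a b ha hb hab => ?_⟩
  simp only [smul_eq_mul]
  rw [← MeasureTheory.integral_const_mul, ← MeasureTheory.integral_const_mul,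
    ← MeasureTheory.integral_add ((hint x hx).const_mul a) ((hint y hy).const_mul b)]
  refine MeasureTheory.integral_mono_ae (((hint x hx).const_mul a).add ((hint y hy).const_mul b))
    (hint _ (hs hx hy ha hb hab)) ?_
  filter_upwards [hf] with ω hω using hω.2 hx hy ha hb hab

end ConvexAnalysis

section ParallelSum

open MeasureTheory Set

/-- The parallel sum `(a⁻¹ + b⁻¹)⁻¹` of two nonnegative numbers, written so that it vanishes as
soon as `a` or `b` does. -/
noncomputable def parallelSum (a b : ℝ) : ℝ :=
  a * b / (a + b)

lemma isLeast_range_parallelSum {𝕜 : Type*} [RCLike 𝕜] {a b : ℝ} (ha : 0 ≤ a) (hb : 0 ≤ b)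
    (z : 𝕜) :
    IsLeast (range fun x : 𝕜 => a * ‖x‖ ^ 2 + b * ‖z - x‖ ^ 2) (parallelSum a b * ‖z‖ ^ 2) := by
  rcases (add_nonneg ha hb).eq_or_lt with h0 | hpos
  · obtain ⟨rfl, rfl⟩ := (add_eq_zero_iff_of_nonneg ha hb).1 h0.symm
    simp [IsLeast, lowerBounds, parallelSum]
  constructor
  · have hz : z - (b / (a + b) : ℝ) * z = (a / (a + b) : ℝ) * z := by
      rw [← one_sub_mul, ← RCLike.ofReal_one, ← RCLike.ofReal_sub, one_sub_div hpos.ne',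
        add_sub_cancel_right]
    refine ⟨(b / (a + b) : ℝ) * z, ?_⟩
    simp only [hz, norm_mul, RCLike.norm_ofReal, mul_pow, sq_abs, parallelSum]
    field_simp
    ring
  · rintro _ ⟨x, rfl⟩
    have hz : ‖z‖ ≤ ‖x‖ + ‖z - x‖ := by simpa using norm_add_le x (z - x)
    have hnonneg : 0 ≤ parallelSum a b := div_nonneg (mul_nonneg ha hb) hpos.le
    calc parallelSum a b * ‖z‖ ^ 2
        ≤ parallelSum a b * (‖x‖ + ‖z - x‖) ^ 2 := by gcongr
      _ ≤ parallelSum a b * (‖x‖ + ‖z - x‖) ^ 2 + (a * ‖x‖ - b * ‖z - x‖) ^ 2 / (a + b) :=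
        le_add_of_nonneg_right (by positivity)
      _ = a * ‖x‖ ^ 2 + b * ‖z - x‖ ^ 2 := by
        rw [parallelSum]
        field_simp
        ring

lemma exists_measure_rpow_mul_rpow_eq_integral_parallelSum {p : ℝ} (hp : p ∈ Ioo 0 1) :
    ∃ μ : Measure ℝ, ∀ a b : ℝ, 0 ≤ a → 0 ≤ b →
      IntegrableOn (fun s => s ^ (-p) * parallelSum a (s⁻¹ * b)) (Ioi 0) μ ∧
      a ^ p * b ^ (1 - p) = ∫ s in Ioi 0, s ^ (-p) * parallelSum a (s⁻¹ * b) ∂μ := by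
  have hp' : 1 - p ∈ Ioo 0 1 := ⟨sub_pos.2 hp.2, sub_lt_self 1 hp.1⟩
  obtain ⟨μ, hμ⟩ := Real.exists_measure_rpow_eq_integral_rpowIntegrand₀₁ hp'
  refine ⟨μ, fun a b ha hb => ?_⟩
  rcases ha.eq_or_lt with rfl | ha
  · simp [Real.zero_rpow hp.1.ne', parallelSum]
  obtain ⟨hint, heq⟩ := hμ (b / a) (div_nonneg hb ha.le)
  have hker : EqOn (fun s => a * Real.rpowIntegrand₀₁ (1 - p) s (b / a))
      (fun s => s ^ (-p) * parallelSum a (s⁻¹ * b)) (Ioi 0) := by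
    intro s (hs : 0 < s)
    have : 0 < s * a + b := by positivity
    simp only [Real.rpowIntegrand₀₁_eq_pow_div hp' hs.le (div_nonneg hb ha.le), parallelSum]
    rw [sub_sub_cancel_left]
    field_simp
  refine ⟨IntegrableOn.congr_fun (hint.const_mul a) hker measurableSet_Ioi, ?_⟩
  rw [← setIntegral_congr_fun measurableSet_Ioi hker, integral_const_mul, ← heq,
    Real.div_rpow hb ha.le, Real.rpow_sub ha, Real.rpow_one]
  field_simp

end ParallelSum

section SpectralForm

open scoped MatrixOrder
open MeasureTheory Set

variable {m n 𝕜 : Type*} [RCLike 𝕜] [Fintype m] [DecidableEq m] [Fintype n] [DecidableEq n]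

/-- The real part of the trace, as a real-linear functional; on products of two positive
semidefinite matrices it is the trace itself. -/
noncomputable def reTrace : Matrix n n 𝕜 →ₗ[ℝ] ℝ :=
  RCLike.reLm ∘ₗ Matrix.traceLinearMap n ℝ 𝕜

omit [DecidableEq n] in
lemma reTrace_apply (A : Matrix n n 𝕜) : reTrace A = RCLike.re A.trace := rfl

omit [DecidableEq m] [DecidableEq n] in
lemma reTrace_mul_comm (A : Matrix m n 𝕜) (B : Matrix n m 𝕜) :
    reTrace (A * B) = reTrace (B * A) :=
  congrArg RCLike.re (Matrix.trace_mul_comm A B)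

/-- The coordinates of a matrix, seen as an operator between spaces carrying Hermitian operators
`A` and `B`, with respect to the chosen eigenbases of `A` and `B`. -/
noncomputable def eigenbasisCoord {A : Matrix m m 𝕜} {B : Matrix n n 𝕜} (hA : A.IsHermitian)
    (hB : B.IsHermitian) : Matrix m n 𝕜 ≃ₗ[ℝ] Matrix m n 𝕜 where
  toFun K :=
    star (hA.eigenvectorUnitary : Matrix m m 𝕜) * K * (hB.eigenvectorUnitary : Matrix n n 𝕜)
  invFun x :=
    (hA.eigenvectorUnitary : Matrix m m 𝕜) * x * star (hB.eigenvectorUnitary : Matrix n n 𝕜)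
  map_add' := by simp [Matrix.mul_add, Matrix.add_mul]
  map_smul' := by simp
  left_inv K := by
    have hU := Unitary.mul_star_self_of_mem hA.eigenvectorUnitary.2
    have hV := Unitary.mul_star_self_of_mem hB.eigenvectorUnitary.2
    simp only [← Matrix.mul_assoc, hU, Matrix.one_mul]
    rw [Matrix.mul_assoc, hV, Matrix.mul_one]
  right_inv x := by
    have hU := Unitary.star_mul_self_of_mem hA.eigenvectorUnitary.2
    have hV := Unitary.star_mul_self_of_mem hB.eigenvectorUnitary.2
    simp only [← Matrix.mul_assoc, hU, Matrix.one_mul]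
    rw [Matrix.mul_assoc, hV, Matrix.mul_one]

/-- The quadratic form `K ↦ ⟪K, φ(L_A, R_B) K⟫` of the bivariate functional calculus of the
commuting operators `L_A` and `R_B` of left multiplication by `A` and right multiplication by `B`,
with the junk value `0` unless `A` and `B` are Hermitian. -/
noncomputable def spectralForm (φ : ℝ → ℝ → ℝ) (A : Matrix m m 𝕜) (B : Matrix n n 𝕜)
    (K : Matrix m n 𝕜) : ℝ :=
  if h : A.IsHermitian ∧ B.IsHermitian then
    ∑ i, ∑ j, φ (h.1.eigenvalues i) (h.2.eigenvalues j) * ‖eigenbasisCoord h.1 h.2 K i j‖ ^ 2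
  else 0

variable {A : Matrix m m 𝕜} {B : Matrix n n 𝕜}

lemma spectralForm_eq (hA : A.IsHermitian) (hB : B.IsHermitian) (φ : ℝ → ℝ → ℝ)
    (K : Matrix m n 𝕜) :
    spectralForm φ A B K =
      ∑ i, ∑ j, φ (hA.eigenvalues i) (hB.eigenvalues j) * ‖eigenbasisCoord hA hB K i j‖ ^ 2 :=
  dif_pos ⟨hA, hB⟩

lemma spectralForm_add (φ ψ : ℝ → ℝ → ℝ) (A : Matrix m m 𝕜) (B : Matrix n n 𝕜)
    (K : Matrix m n 𝕜) :
    spectralForm (fun a b => φ a b + ψ a b) A B K =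
      spectralForm φ A B K + spectralForm ψ A B K := by
  unfold spectralForm
  split_ifs
  · simp only [add_mul, Finset.sum_add_distrib]
  · simp

lemma spectralForm_const_mul (c : ℝ) (φ : ℝ → ℝ → ℝ) (A : Matrix m m 𝕜) (B : Matrix n n 𝕜)
    (K : Matrix m n 𝕜) :
    spectralForm (fun a b => c * φ a b) A B K = c * spectralForm φ A B K := by
  unfold spectralForm
  split_ifs
  · simp only [mul_assoc, Finset.mul_sum]
  · simp

lemma spectralForm_mono {φ ψ : ℝ → ℝ → ℝ}
    (h : ∀ a ∈ spectrum ℝ A, ∀ b ∈ spectrum ℝ B, φ a b ≤ ψ a b) (K : Matrix m n 𝕜) :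
    spectralForm φ A B K ≤ spectralForm ψ A B K := by
  unfold spectralForm
  split_ifs with hAB
  · gcongr with i _ j _
    exact h _ (hAB.1.eigenvalues_mem_spectrum_real i) _ (hAB.2.eigenvalues_mem_spectrum_real j)
  · rfl

lemma spectralForm_congr {φ ψ : ℝ → ℝ → ℝ}
    (h : ∀ a ∈ spectrum ℝ A, ∀ b ∈ spectrum ℝ B, φ a b = ψ a b) (K : Matrix m n 𝕜) :
    spectralForm φ A B K = spectralForm ψ A B K :=
  (spectralForm_mono (fun a ha b hb => (h a ha b hb).le) K).antisymm
    (spectralForm_mono (fun a ha b hb => (h a ha b hb).ge) K)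

lemma integrable_spectralForm {Ω : Type*} [MeasurableSpace Ω] {μ : Measure Ω}
    {φ : Ω → ℝ → ℝ → ℝ}
    (h : ∀ a ∈ spectrum ℝ A, ∀ b ∈ spectrum ℝ B, Integrable (fun ω => φ ω a b) μ)
    (K : Matrix m n 𝕜) : Integrable (fun ω => spectralForm (φ ω) A B K) μ := by
  unfold spectralForm
  split_ifs with hAB
  · exact integrable_finsetSum _ fun i _ => integrable_finsetSum _ fun j _ =>
      (h _ (hAB.1.eigenvalues_mem_spectrum_real i) _
        (hAB.2.eigenvalues_mem_spectrum_real j)).mul_const _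
  · exact integrable_zero _ _ _

lemma integral_spectralForm {Ω : Type*} [MeasurableSpace Ω] {μ : Measure Ω}
    {φ : Ω → ℝ → ℝ → ℝ}
    (h : ∀ a ∈ spectrum ℝ A, ∀ b ∈ spectrum ℝ B, Integrable (fun ω => φ ω a b) μ)
    (K : Matrix m n 𝕜) :
    ∫ ω, spectralForm (φ ω) A B K ∂μ = spectralForm (fun a b => ∫ ω, φ ω a b ∂μ) A B K := by
  unfold spectralForm
  split_ifs with hAB
  · have hint i j := (h _ (hAB.1.eigenvalues_mem_spectrum_real i) _
      (hAB.2.eigenvalues_mem_spectrum_real j)).mul_const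
        (‖eigenbasisCoord hAB.1 hAB.2 K i j‖ ^ 2)
    rw [integral_finsetSum _ fun i _ => integrable_finsetSum _ fun j _ => hint i j]
    simp only [integral_finsetSum _ fun j _ => hint _ j, integral_mul_const]
  · exact integral_zero _ _

lemma reTrace_mul_cfc_mul_cfc (hA : A.IsHermitian) (hB : B.IsHermitian) (f g : ℝ → ℝ)
    (K : Matrix m n 𝕜) :
    reTrace (Kᴴ * cfc f A * K * cfc g B) = spectralForm (fun a b => f a * g b) A B K := by
  set x : Matrix m n 𝕜 := eigenbasisCoord hA hB K with hx
  have htrace : (Kᴴ * cfc f A * K * cfc g B).trace =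
      (xᴴ * Matrix.diagonal (RCLike.ofReal ∘ f ∘ hA.eigenvalues : m → 𝕜) * x *
        Matrix.diagonal (RCLike.ofReal ∘ g ∘ hB.eigenvalues : n → 𝕜)).trace := by
    simp only [hA.cfc_eq, hB.cfc_eq, Matrix.IsHermitian.cfc, Unitary.conjStarAlgAut_apply, hx,
      eigenbasisCoord, LinearEquiv.coe_mk, LinearMap.coe_mk, AddHom.coe_mk,
      Matrix.conjTranspose_mul, Matrix.star_eq_conjTranspose, Matrix.conjTranspose_conjTranspose,
      Matrix.mul_assoc]
    rw [Matrix.trace_mul_comm (hB.eigenvectorUnitary : Matrix n n 𝕜)ᴴ]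
    simp only [Matrix.mul_assoc]
  rw [reTrace_apply, htrace, spectralForm_eq hA hB, Finset.sum_comm, Matrix.trace, map_sum]
  refine Finset.sum_congr rfl fun j _ => ?_
  rw [Matrix.diag_apply, Matrix.mul_diagonal, Matrix.mul_apply, Finset.sum_mul, map_sum]
  refine Finset.sum_congr rfl fun i _ => ?_
  rw [Matrix.mul_diagonal, Matrix.conjTranspose_apply]
  simp only [Function.comp_apply, RCLike.star_def]
  rw [← hx, mul_right_comm (starRingEnd 𝕜 (x i j)), RCLike.conj_mul]
  norm_cast
  ring

lemma reTrace_conjTranspose_mul_mul (hA : A.IsHermitian) (hB : B.IsHermitian)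
    (K : Matrix m n 𝕜) : reTrace (Kᴴ * A * K) = spectralForm (fun a _ => a) A B K := by
  have h := reTrace_mul_cfc_mul_cfc hA hB (fun a => a) (fun _ => 1) K
  rw [cfc_id' ℝ A hA.isSelfAdjoint, cfc_const_one ℝ B hB.isSelfAdjoint, Matrix.mul_one] at h
  simpa only [mul_one] using h

lemma reTrace_conjTranspose_mul_self_mul (hA : A.IsHermitian) (hB : B.IsHermitian)
    (K : Matrix m n 𝕜) : reTrace (Kᴴ * K * B) = spectralForm (fun _ b => b) A B K := by
  have h := reTrace_mul_cfc_mul_cfc hA hB (fun _ => 1) (fun b => b) K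
  rw [cfc_id' ℝ B hB.isSelfAdjoint, cfc_const_one ℝ A hA.isSelfAdjoint, Matrix.mul_one] at h
  simpa only [one_mul] using h

lemma isLeast_range_spectralForm_parallelSum (hA : 0 ≤ A) (hB : 0 ≤ B) {c : ℝ} (hc : 0 ≤ c)
    (K : Matrix m n 𝕜) :
    IsLeast
      (range fun X : Matrix m n 𝕜 =>
        reTrace (Xᴴ * A * X) + c * reTrace ((K - X)ᴴ * (K - X) * B))
      (spectralForm (fun a b => parallelSum a (c * b)) A B K) := by
  have hA' := hA.posSemidef.isHermitian
  have hB' := hB.posSemidef.isHermitian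
  set coord := eigenbasisCoord hA' hB' with hcoord
  have hcost (X : Matrix m n 𝕜) :
      reTrace (Xᴴ * A * X) + c * reTrace ((K - X)ᴴ * (K - X) * B) =
        ∑ i, ∑ j, (hA'.eigenvalues i * ‖coord X i j‖ ^ 2 +
          c * hB'.eigenvalues j * ‖coord K i j - coord X i j‖ ^ 2) := by
    rw [reTrace_conjTranspose_mul_mul hA' hB', reTrace_conjTranspose_mul_self_mul hA' hB',
      spectralForm_eq hA' hB', spectralForm_eq hA' hB']
    simp only [map_sub, Matrix.sub_apply, Finset.mul_sum, Finset.sum_add_distrib, hcoord,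
      mul_assoc]
  have hmin i j := isLeast_range_parallelSum (hA.posSemidef.eigenvalues_nonneg i)
    (mul_nonneg hc (hB.posSemidef.eigenvalues_nonneg j)) (coord K i j)
  simp only [hcost, spectralForm_eq hA' hB', ← hcoord]
  constructor
  · choose x hx using fun i j => (hmin i j).1
    exact ⟨coord.symm (Matrix.of x), by simp [← hx]⟩
  · rintro _ ⟨X, rfl⟩
    dsimp only
    gcongr with i _ j _
    exact (hmin i j).2 ⟨coord X i j, rfl⟩

lemma concaveOn_spectralForm_parallelSum {c : ℝ} (hc : 0 ≤ c) (K : Matrix m n 𝕜) :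
    ConcaveOn ℝ (Ici (0 : Matrix m m 𝕜) ×ˢ Ici (0 : Matrix n n 𝕜))
      fun x => spectralForm (fun a b => parallelSum a (c * b)) x.1 x.2 K := by
  let cost (X : Matrix m n 𝕜) : Matrix m m 𝕜 × Matrix n n 𝕜 →ₗ[ℝ] ℝ :=
    reTrace ∘ₗ mulRightLinearMap n ℝ X ∘ₗ mulLeftLinearMap m ℝ Xᴴ ∘ₗ LinearMap.fst ℝ _ _ +
      c • reTrace ∘ₗ mulLeftLinearMap n ℝ ((K - X)ᴴ * (K - X)) ∘ₗ LinearMap.snd ℝ _ _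
  have hconv := (convex_Ici (𝕜 := ℝ) (0 : Matrix m m 𝕜)).prod (convex_Ici (0 : Matrix n n 𝕜))
  exact concaveOn_of_isLeast hconv (fun X => (cost X).concaveOn hconv) fun x hx =>
    isLeast_range_spectralForm_parallelSum hx.1 hx.2 hc K

end SpectralForm

section TraceConcavity

open scoped MatrixOrder
open MeasureTheory Set

variable {m n 𝕜 : Type*} [RCLike 𝕜] [Fintype m] [DecidableEq m] [Fintype n] [DecidableEq n]

theorem concaveOn_reTrace_mul_rpow_mul_rpow {p : ℝ} (hp : p ∈ Ioo 0 1) (K : Matrix m n 𝕜) :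
    ConcaveOn ℝ (Ici (0 : Matrix m m 𝕜) ×ˢ Ici (0 : Matrix n n 𝕜))
      fun x => reTrace (Kᴴ * x.1 ^ p * K * x.2 ^ (1 - p)) := by
  obtain ⟨μ, hμ⟩ := exists_measure_rpow_mul_rpow_eq_integral_parallelSum hp
  have hconv := (convex_Ici (𝕜 := ℝ) (0 : Matrix m m 𝕜)).prod (convex_Ici (0 : Matrix n n 𝕜))
  have hint {A : Matrix m m 𝕜} {B : Matrix n n 𝕜} (hA : 0 ≤ A) (hB : 0 ≤ B) :
      ∀ a ∈ spectrum ℝ A, ∀ b ∈ spectrum ℝ B,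
        IntegrableOn (fun s => s ^ (-p) * parallelSum a (s⁻¹ * b)) (Ioi 0) μ := fun a ha b hb =>
    (hμ a b (spectrum_nonneg_of_nonneg hA ha) (spectrum_nonneg_of_nonneg hB hb)).1
  have hconc : ConcaveOn ℝ (Ici (0 : Matrix m m 𝕜) ×ˢ Ici (0 : Matrix n n 𝕜)) fun x =>
      ∫ s in Ioi 0, spectralForm (fun a b => s ^ (-p) * parallelSum a (s⁻¹ * b)) x.1 x.2 K ∂μ := by
    refine concaveOn_integral hconv ?_ fun x hx => integrable_spectralForm (hint hx.1 hx.2) K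
    filter_upwards [ae_restrict_mem measurableSet_Ioi] with s (hs : 0 < s)
    simp only [spectralForm_const_mul]
    exact (concaveOn_spectralForm_parallelSum (inv_nonneg.2 hs.le) K).smul
      (Real.rpow_nonneg hs.le (-p))
  refine hconc.congr fun x ⟨(hx₁ : 0 ≤ x.1), (hx₂ : 0 ≤ x.2)⟩ => ?_
  dsimp only
  rw [integral_spectralForm (hint hx₁ hx₂), CFC.rpow_eq_cfc_real hx₁, CFC.rpow_eq_cfc_real hx₂,
    reTrace_mul_cfc_mul_cfc hx₁.posSemidef.isHermitian hx₂.posSemidef.isHermitian]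
  exact spectralForm_congr (fun a ha b hb => (hμ a b (spectrum_nonneg_of_nonneg hx₁ ha)
    (spectrum_nonneg_of_nonneg hx₂ hb)).2.symm) K

lemma reTrace_mul_le_of_holderConjugate {A B : Matrix n n 𝕜} (hA : 0 ≤ A) (hB : 0 ≤ B) {p q : ℝ}
    (hpq : p.HolderConjugate q) :
    reTrace (A * B) ≤ p⁻¹ * reTrace (A ^ p) + q⁻¹ * reTrace (B ^ q) := by
  have hA' := hA.posSemidef.isHermitian
  have hB' := hB.posSemidef.isHermitian
  have hform (f g : ℝ → ℝ) : reTrace (cfc f A * cfc g B) =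
      spectralForm (fun a b => f a * g b) A B (1 : Matrix n n 𝕜) := by
    simpa using reTrace_mul_cfc_mul_cfc hA' hB' f g 1
  have hAB := hform (fun a => a) (fun b => b)
  have hAp := hform (· ^ p) (fun _ => 1)
  have hBq := hform (fun _ => 1) (· ^ q)
  rw [cfc_id' ℝ A hA'.isSelfAdjoint, cfc_id' ℝ B hB'.isSelfAdjoint] at hAB
  rw [cfc_const_one ℝ B hB'.isSelfAdjoint, mul_one, ← CFC.rpow_eq_cfc_real hA] at hAp
  rw [cfc_const_one ℝ A hA'.isSelfAdjoint, one_mul, ← CFC.rpow_eq_cfc_real hB] at hBq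
  rw [hAB, hAp, hBq, ← spectralForm_const_mul, ← spectralForm_const_mul, ← spectralForm_add]
  refine spectralForm_mono (fun a ha b hb => ?_) 1
  have := Real.young_inequality_of_nonneg (spectrum_nonneg_of_nonneg hA ha)
    (spectrum_nonneg_of_nonneg hB hb) hpq
  simpa [div_eq_inv_mul] using this

lemma rpow_add_of_nonneg {A : Matrix n n 𝕜} (hA : 0 ≤ A) {x y : ℝ} (hx : 0 ≤ x) (hy : 0 ≤ y) :
    A ^ (x + y) = A ^ x * A ^ y := by
  rw [CFC.rpow_eq_cfc_real hA, CFC.rpow_eq_cfc_real hA, CFC.rpow_eq_cfc_real hA,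
    ← cfc_mul (· ^ x) (· ^ y) A (Real.continuous_rpow_const hx).continuousOn
      (Real.continuous_rpow_const hy).continuousOn]
  exact cfc_congr fun a ha => Real.rpow_add_of_nonneg (spectrum_nonneg_of_nonneg hA ha) hx hy

lemma isGreatest_image_reTrace_mul_rpow_inv {A : Matrix n n 𝕜} (hA : 0 ≤ A) {p q : ℝ}
    (hpq : p.HolderConjugate q) :
    IsGreatest ((fun B : Matrix n n 𝕜 => reTrace (A * B ^ q⁻¹) - q⁻¹ * reTrace B) '' Ici 0)
      (p⁻¹ * reTrace (A ^ p)) := by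
  constructor
  · refine ⟨A ^ p, mem_Ici.2 CFC.rpow_nonneg, ?_⟩
    have hA_mul : A * (A ^ p) ^ q⁻¹ = A ^ p := by
      rw [CFC.rpow_rpow_of_exponent_nonneg A p q⁻¹ hpq.nonneg hpq.symm.inv_nonneg,
        ← div_eq_mul_inv, hpq.div_conj_eq_sub_one]
      nth_rw 1 [← CFC.rpow_one A hA]
      rw [← rpow_add_of_nonneg hA zero_le_one hpq.sub_one_pos.le, add_sub_cancel]
    simp only [hA_mul]
    rw [← hpq.one_sub_inv]
    ring
  · rintro _ ⟨B, hB : 0 ≤ B, rfl⟩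
    have hB_rpow : (B ^ q⁻¹) ^ q = B := by
      rw [CFC.rpow_rpow_of_exponent_nonneg B q⁻¹ q hpq.symm.inv_nonneg hpq.symm.nonneg,
        inv_mul_cancel₀ hpq.symm.ne_zero, CFC.rpow_one B]
    have := reTrace_mul_le_of_holderConjugate hA (CFC.rpow_nonneg (a := B) (y := q⁻¹)) hpq
    rw [hB_rpow] at this
    exact sub_le_iff_le_add.2 this

theorem concaveOn_reTrace_conj_rpow_rpow_inv {p : ℝ} (hp : p ∈ Ioo 0 1) (K : Matrix m n 𝕜) :
    ConcaveOn ℝ (Ici (0 : Matrix m m 𝕜)) fun A => reTrace ((Kᴴ * A ^ p * K) ^ p⁻¹) := by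
  have hpq : p⁻¹.HolderConjugate (1 - p)⁻¹ := .inv_one_sub_inv hp.1 hp.2
  have hconc : ConcaveOn ℝ (Ici (0 : Matrix m m 𝕜) ×ˢ Ici (0 : Matrix n n 𝕜)) fun x =>
      reTrace (Kᴴ * x.1 ^ p * K * x.2 ^ (1 - p)) - (1 - p) * reTrace x.2 :=
    (concaveOn_reTrace_mul_rpow_mul_rpow hp K).sub
      (((1 - p) • reTrace ∘ₗ LinearMap.snd ℝ _ _).convexOn
        ((convex_Ici _).prod (convex_Ici _)))
  have hmax : ∀ A ∈ Ici (0 : Matrix m m 𝕜),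
      IsGreatest ((fun B : Matrix n n 𝕜 =>
        reTrace (Kᴴ * A ^ p * K * B ^ (1 - p)) - (1 - p) * reTrace B) '' Ici 0)
        (p * reTrace ((Kᴴ * A ^ p * K) ^ p⁻¹)) := fun A _ => by
    have hconj : 0 ≤ Kᴴ * A ^ p * K :=
      (CFC.rpow_nonneg.posSemidef.conjTranspose_mul_mul_same K).nonneg
    simpa only [inv_inv] using isGreatest_image_reTrace_mul_rpow_inv hconj hpq
  have := (concaveOn_of_isGreatest_image_prodMk (convex_Ici _) hconc hmax).smul hpq.nonneg
  simpa only [smul_eq_mul, inv_mul_cancel_left₀ hp.1.ne'] using this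

end TraceConcavity

section SandwichedRenyi

open scoped MatrixOrder
open Set

variable {n 𝕜 : Type*} [RCLike 𝕜] [Fintype n] [DecidableEq n]

lemma reTrace_cfc {A : Matrix n n 𝕜} (hA : A.IsHermitian) (f : ℝ → ℝ) :
    reTrace (cfc f A) = ∑ i, f (hA.eigenvalues i) := by
  rw [hA.cfc_eq, Matrix.IsHermitian.cfc, Unitary.conjStarAlgAut_apply, reTrace_mul_comm,
    ← Matrix.mul_assoc, Unitary.star_mul_self_of_mem hA.eigenvectorUnitary.2, Matrix.one_mul,
    reTrace_apply, Matrix.trace_diagonal, map_sum]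
  simp only [Function.comp_apply, RCLike.ofReal_re]

lemma reTrace_cfc_eq_of_charpoly_eq {A B : Matrix n n 𝕜} (hA : A.IsHermitian) (hB : B.IsHermitian)
    (h : A.charpoly = B.charpoly) (f : ℝ → ℝ) : reTrace (cfc f A) = reTrace (cfc f B) := by
  rw [reTrace_cfc hA, reTrace_cfc hB,
    (Matrix.IsHermitian.eigenvalues_eq_eigenvalues_iff hA hB).2 h]

lemma reTrace_conjTranspose_mul_self_rpow (K : Matrix n n 𝕜) (p : ℝ) :
    reTrace ((Kᴴ * K) ^ p) = reTrace ((K * Kᴴ) ^ p) := by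
  have h₁ := Matrix.posSemidef_conjTranspose_mul_self K
  have h₂ := Matrix.posSemidef_self_mul_conjTranspose K
  rw [CFC.rpow_eq_cfc_real h₁.nonneg, CFC.rpow_eq_cfc_real h₂.nonneg]
  exact reTrace_cfc_eq_of_charpoly_eq h₁.isHermitian h₂.isHermitian
    (Matrix.charpoly_mul_comm Kᴴ K) _

lemma isGreatest_range_reTrace_conj {A : Matrix n n 𝕜} (hA : 0 ≤ A) {p q : ℝ}
    (hpq : p.HolderConjugate q) :
    IsGreatest (range fun K : Matrix n n 𝕜 =>
        reTrace (Kᴴ * A * K) - q⁻¹ * reTrace ((Kᴴ * K) ^ q))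
      (p⁻¹ * reTrace (A ^ p)) := by
  have hq : 0 ≤ q := hpq.symm.nonneg
  have hq_inv : 0 ≤ q⁻¹ := inv_nonneg.2 hq
  have hsurj : range (fun K : Matrix n n 𝕜 => (K * Kᴴ) ^ q) = Ici 0 := by
    refine (range_subset_iff.2 fun K => mem_Ici.2 CFC.rpow_nonneg).antisymm
      fun B (hB : 0 ≤ B) => ?_
    have hroot : (B ^ (q⁻¹ / 2))ᴴ = B ^ (q⁻¹ / 2) := CFC.rpow_nonneg.posSemidef.isHermitian
    refine ⟨B ^ (q⁻¹ / 2), ?_⟩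
    dsimp only
    rw [hroot, ← rpow_add_of_nonneg hB (by positivity) (by positivity), add_halves,
      CFC.rpow_rpow_of_exponent_nonneg B _ _ hq_inv hq, inv_mul_cancel₀ hpq.symm.ne_zero,
      CFC.rpow_one B]
  have hobj (K : Matrix n n 𝕜) : reTrace (Kᴴ * A * K) - q⁻¹ * reTrace ((Kᴴ * K) ^ q) =
      reTrace (A * ((K * Kᴴ) ^ q) ^ q⁻¹) - q⁻¹ * reTrace ((K * Kᴴ) ^ q) := by
    have hK := (Matrix.posSemidef_self_mul_conjTranspose K).nonneg
    rw [CFC.rpow_rpow_of_exponent_nonneg _ _ _ hq hq_inv, mul_inv_cancel₀ hpq.symm.ne_zero,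
      CFC.rpow_one _, reTrace_conjTranspose_mul_self_rpow, Matrix.mul_assoc, reTrace_mul_comm,
      Matrix.mul_assoc]
  have := isGreatest_image_reTrace_mul_rpow_inv hA hpq
  rw [← hsurj, ← range_comp] at this
  simpa only [hobj, Function.comp_def] using this

/-- The trace functional `Q_α(ρ, σ)` underlying the sandwiched Rényi divergence of order `α`, for
positive semidefinite `ρ` and positive definite `σ`. -/
noncomputable def sandwichedQ (α : ℝ) (ρ σ : Matrix n n 𝕜) : ℝ :=
  reTrace ((σ ^ ((1 - α) / (2 * α)) * ρ * σ ^ ((1 - α) / (2 * α))) ^ α)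

lemma isGreatest_range_sandwichedQ {ρ σ : Matrix n n 𝕜} (hρ : ρ.PosSemidef) (hσ : σ.PosDef)
    {α β : ℝ} (hαβ : α.HolderConjugate β) :
    IsGreatest (range fun K : Matrix n n 𝕜 =>
        reTrace (Kᴴ * ρ * K) - β⁻¹ * reTrace ((Kᴴ * σ ^ β⁻¹ * K) ^ β))
      (α⁻¹ * sandwichedQ α ρ σ) := by
  have hσ' : IsStrictlyPositive σ := Matrix.isStrictlyPositive_iff_posDef.2 hσ
  have hα := hαβ.ne_zero
  obtain ⟨r, hr⟩ : ∃ r, r = (1 - α) / (2 * α) := ⟨_, rfl⟩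
  have hβ : r + β⁻¹ = -r := by
    rw [hr, ← hαβ.one_sub_inv]
    field_simp
    ring
  have hstar : (σ ^ r)ᴴ = σ ^ r := CFC.rpow_nonneg.posSemidef.isHermitian
  have hcancel : σ ^ r * σ ^ β⁻¹ * σ ^ r = 1 := by
    rw [← CFC.rpow_add hσ'.isUnit, hβ, CFC.rpow_neg_mul_rpow r]
  have hsurj : Function.Surjective (σ ^ r * · : Matrix n n 𝕜 → Matrix n n 𝕜) := fun K =>
    ⟨σ ^ (-r) * K, by dsimp only; rw [← mul_assoc, CFC.rpow_mul_rpow_neg r, one_mul]⟩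
  have hobj (L : Matrix n n 𝕜) :
      reTrace (Lᴴ * (σ ^ r * ρ * σ ^ r) * L) - β⁻¹ * reTrace ((Lᴴ * L) ^ β) =
        reTrace ((σ ^ r * L)ᴴ * ρ * (σ ^ r * L)) -
          β⁻¹ * reTrace (((σ ^ r * L)ᴴ * σ ^ β⁻¹ * (σ ^ r * L)) ^ β) := by
    have hL : (σ ^ r * L)ᴴ * σ ^ β⁻¹ * (σ ^ r * L) = Lᴴ * (σ ^ r * σ ^ β⁻¹ * σ ^ r) * L := by
      simp only [Matrix.conjTranspose_mul, hstar, mul_assoc]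
    rw [hL, hcancel, mul_one]
    simp only [Matrix.conjTranspose_mul, hstar, mul_assoc]
  have hconj : 0 ≤ σ ^ r * ρ * σ ^ r :=
    (hstar ▸ hρ.conjTranspose_mul_mul_same (σ ^ r)).nonneg
  rw [← hsurj.range_comp, sandwichedQ, ← hr]
  simpa only [hobj, Function.comp_def] using isGreatest_range_reTrace_conj hconj hαβ

omit [Fintype n] [DecidableEq n] in
lemma convex_setOf_posSemidef : Convex ℝ {A : Matrix n n 𝕜 | A.PosSemidef} :=
  fun _ hA _ hB _ _ ha hb _ => (hA.smul ha).add (hB.smul hb)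

omit [Fintype n] [DecidableEq n] in
lemma convex_setOf_posDef : Convex ℝ {A : Matrix n n 𝕜 | A.PosDef} :=
  convex_iff_forall_pos.2 fun _ hA _ hB _ _ ha hb _ => (hA.smul ha).add (hB.smul hb)

theorem Q_jointly_convex_general {α : ℝ} (hα : 1 < α) :
    ConvexOn ℝ ({ρ : Matrix n n 𝕜 | ρ.PosSemidef} ×ˢ {σ : Matrix n n 𝕜 | σ.PosDef})
      fun x => sandwichedQ α x.1 x.2 := by
  have hαβ := Real.HolderConjugate.conjExponent hα
  set β := α.conjExponent
  let s := {ρ : Matrix n n 𝕜 | ρ.PosSemidef} ×ˢ {σ : Matrix n n 𝕜 | σ.PosDef}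
  have hs : Convex ℝ s := convex_setOf_posSemidef.prod convex_setOf_posDef
  have hlinear (K : Matrix n n 𝕜) : ConvexOn ℝ s fun x => reTrace (Kᴴ * x.1 * K) :=
    (reTrace ∘ₗ mulRightLinearMap n ℝ K ∘ₗ mulLeftLinearMap n ℝ Kᴴ ∘ₗ
      LinearMap.fst ℝ _ (Matrix n n 𝕜)).convexOn hs
  have hepstein (K : Matrix n n 𝕜) : ConcaveOn ℝ s fun x =>
      β⁻¹ * reTrace ((Kᴴ * x.2 ^ β⁻¹ * K) ^ β) := by
    have h := concaveOn_reTrace_conj_rpow_rpow_inv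
      ⟨hαβ.symm.inv_pos, inv_lt_one_of_one_lt₀ hαβ.symm.lt⟩ K
    rw [inv_inv] at h
    exact ((h.comp_linearMap (LinearMap.snd ℝ (Matrix n n 𝕜) _)).subset
      (fun x hx => hx.2.posSemidef.nonneg) hs).smul hαβ.symm.inv_nonneg
  have hQ := (convexOn_of_isGreatest hs (fun K => (hlinear K).sub (hepstein K)) fun x hx =>
    isGreatest_range_sandwichedQ hx.1 hx.2 hαβ).smul hαβ.nonneg
  simpa only [smul_eq_mul, mul_inv_cancel_left₀ hαβ.ne_zero] using hQ

lemma mpow_eq_rpow {A : Matrix n n ℂ} (hA : 0 ≤ A) (p : ℝ) : mpow A p = A ^ p := by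
  have hA' := hA.posSemidef.isHermitian
  rw [CFC.rpow_eq_cfc_real hA, hA'.cfc_eq]
  exact dif_pos hA'

lemma sandwichedQ_eq_mpow {ρ σ : Matrix n n ℂ} (hρ : ρ.PosSemidef) (hσ : σ.PosSemidef) (α : ℝ) :
    sandwichedQ α ρ σ =
      (mpow (mpow σ ((1 - α) / (2 * α)) * ρ * mpow σ ((1 - α) / (2 * α))) α).trace.re := by
  have hσ_rpow : (σ ^ ((1 - α) / (2 * α))).PosSemidef := CFC.rpow_nonneg.posSemidef
  have hconj := hσ_rpow.isHermitian ▸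
    hρ.conjTranspose_mul_mul_same (σ ^ ((1 - α) / (2 * α)))
  rw [mpow_eq_rpow hσ.nonneg, mpow_eq_rpow hconj.nonneg]
  rfl

end SandwichedRenyi

theorem Q_jointly_convex {n : ℕ} (α : ℝ) (hα : 1 < α)
    (ρ₀ ρ₁ σ₀ σ₁ : Matrix (Fin n) (Fin n) ℂ)
    (hρ₀ : ρ₀.PosDef) (hρ₁ : ρ₁.PosDef) (hσ₀ : σ₀.PosDef) (hσ₁ : σ₁.PosDef)
    (t : ℝ) (ht0 : 0 ≤ t) (ht1 : t ≤ 1) :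
    (fun (ρ σ : Matrix (Fin n) (Fin n) ℂ) =>
      (mpow (mpow σ ((1 - α) / (2 * α)) * ρ * mpow σ ((1 - α) / (2 * α))) α).trace.re)
        (((1 - t : ℝ) : ℂ) • ρ₀ + ((t : ℝ) : ℂ) • ρ₁)
        (((1 - t : ℝ) : ℂ) • σ₀ + ((t : ℝ) : ℂ) • σ₁) ≤
      (1 - t) * (fun (ρ σ : Matrix (Fin n) (Fin n) ℂ) =>
      (mpow (mpow σ ((1 - α) / (2 * α)) * ρ * mpow σ ((1 - α) / (2 * α))) α).trace.re) ρ₀ σ₀ + t * (fun (ρ σ : Matrix (Fin n) (Fin n) ℂ) =>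
      (mpow (mpow σ ((1 - α) / (2 * α)) * ρ * mpow σ ((1 - α) / (2 * α))) α).trace.re) ρ₁ σ₁ := by
  simp only [Complex.coe_smul]
  exact ((Q_jointly_convex_general hα).congr fun x hx =>
    sandwichedQ_eq_mpow hx.1 hx.2.posSemidef α).2 (x := (ρ₀, σ₀)) (y := (ρ₁, σ₁))
    ⟨hρ₀.posSemidef, hσ₀⟩ ⟨hρ₁.posSemidef, hσ₁⟩ (sub_nonneg.2 ht1) ht0 (sub_add_cancel 1 t)
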